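/- For all information structures u, v on K × ℕ × ℕ: u ⪰ v (i.e. val(u,g) ≥ val(v,g) for every payoff function g ∈ 𝒢) if and only if there exist garblings q₁, q₂ ∈ 𝒬 with q₁.u = v.q₂. -/

import Mathlib

open scoped BigOperators ENNReal

namespace ValueDistance

/-- An information structure: a probability distribution on `K × ℕ × ℕ`
(state, signal of player 1, signal of player 2). -/
abbrev InfoStruct (K : Type) := PMF (K × ℕ × ℕ)

/-- A behavior strategy / garbling : a map `ℕ → Δ(ℕ)`. -/
abbrev Garbling : Type := ℕ → PMF ℕ

variable {K : Type}

/-- `g` is a payoff function with action bound `L` : values in `[-1,1]`,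
`g k i j = -1` when `i ≥ L`, and `g k i j = 1` when `i < L` and `j ≥ L`. -/
def IsPayoffL (L : ℕ) (g : K → ℕ → ℕ → ℝ) : Prop :=
  (∀ k i j, g k i j ∈ Set.Icc (-1 : ℝ) 1) ∧
  (∀ k i j, L ≤ i → g k i j = -1) ∧
  (∀ k i j, i < L → L ≤ j → g k i j = 1)

/-- `g` belongs to the set `𝒢` of payoff functions. -/
def IsPayoff (g : K → ℕ → ℕ → ℝ) : Prop := ∃ L, IsPayoffL L g

/-- `g` belongs to the set `𝒢₁` of single-agent (player 1) problems. -/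
def IsPayoff1 (g : K → ℕ → ℕ → ℝ) : Prop :=
  IsPayoff g ∧ ∀ k i j j', g k i j = g k i j'

/-- Expected payoff in the Bayesian game `Γ(u,g)` when player 1 uses the behavior
strategy `σ` and player 2 uses `τ`. -/
noncomputable def payoff (u : InfoStruct K) (g : K → ℕ → ℕ → ℝ)
    (σ τ : Garbling) : ℝ :=
  ∑' (x : K × ℕ × ℕ) (i : ℕ) (j : ℕ),
    (u x).toReal * (σ x.2.1 i).toReal * (τ x.2.2 j).toReal * g x.1 i j

/-- The value `val(u,g)` of the zero-sum Bayesian game `Γ(u,g)`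
(the common value of `sup inf` and `inf sup` of the expected payoff;
we take `sup inf` as the definition). -/
noncomputable def val (u : InfoStruct K) (g : K → ℕ → ℕ → ℝ) : ℝ :=
  ⨆ σ : Garbling, ⨅ τ : Garbling, payoff u g σ τ

/-- Total variation distance `‖u − v‖`. -/
noncomputable def tv {α : Type} (u v : PMF α) : ℝ :=
  ∑' x : α, |(u x).toReal - (v x).toReal|

/-- `q.u` : player 1's signal garbled through `q`. -/
noncomputable def garbleLeft (q : Garbling) (u : InfoStruct K) : InfoStruct K :=
  u.bind (fun x => (q x.2.1).map (fun c => (x.1, c, x.2.2)))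

/-- `u.q` : player 2's signal garbled through `q`. -/
noncomputable def garbleRight (u : InfoStruct K) (q : Garbling) : InfoStruct K :=
  u.bind (fun x => (q x.2.2).map (fun d => (x.1, x.2.1, d)))

/-- The value-based distance `d(u,v) = sup_{g ∈ 𝒢} |val(u,g) − val(v,g)|`. -/
noncomputable def dVal (u v : InfoStruct K) : ℝ :=
  ⨆ g : {g : K → ℕ → ℕ → ℝ // IsPayoff g}, |val u g.1 - val v g.1|

/-- The single-agent distance `d₁(u,v) = sup_{g ∈ 𝒢₁} |val(u,g) − val(v,g)|`. -/
noncomputable def d1 (u v : InfoStruct K) : ℝ :=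
  ⨆ g : {g : K → ℕ → ℕ → ℝ // IsPayoff1 g}, |val u g.1 - val v g.1|

/-- Marginal of an information structure on `K × ℕ` (state, player 1's signal). -/
noncomputable def marg1 (u : InfoStruct K) : PMF (K × ℕ) :=
  u.map (fun x => (x.1, x.2.1))

/-- Garbling of a single-agent information structure:
`(q.w)(k,c) = Σ_s w(k,s)·q(s)({c})`. -/
noncomputable def garble1 (q : Garbling) (w : PMF (K × ℕ)) : PMF (K × ℕ) :=
  w.bind (fun x => (q x.2).map (fun c => (x.1, c)))

/-- Marginal of an information structure on the states. -/
noncomputable def margK (u : InfoStruct K) : PMF K := u.map Prod.fst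

/-- Marginal of an information structure on `K × ℕ` (state, player 2's signal). -/
noncomputable def margKD (u : InfoStruct K) : PMF (K × ℕ) :=
  u.map (fun x => (x.1, x.2.2))

/-- `σ.q` : on signal `c`, draw `c'` according to `q(c)` and play `σ(c')`. -/
noncomputable def compGarble (σ q : Garbling) : Garbling :=
  fun c => (q c).bind σ

/-- `u ∈ 𝒰(L)` : both players' signals are `< L` with probability 1. -/
def InU (L : ℕ) (u : InfoStruct K) : Prop :=
  ∀ x : K × ℕ × ℕ, u x ≠ 0 → x.2.1 < L ∧ x.2.2 < L

/-- `q ∈ 𝒬(L)` : garbling with values supported on `{0,…,L−1}`. -/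
def GarblingIn (L : ℕ) (q : Garbling) : Prop :=
  ∀ n m, q n m ≠ 0 → m < L

/-- The two players' signals are conditionally independent given the state:
`u(k)·u(k,c,d) = u(k,c)·u(k,d)` for all `k, c, d`
(equivalently `u(c,d|k) = u(c|k)·u(d|k)` whenever `u(k) > 0`). -/
def CondIndep (u : InfoStruct K) : Prop :=
  ∀ (k : K) (c d : ℕ),
    (∑' y : ℕ × ℕ, u (k, y)) * u (k, c, d)
      = (∑' d' : ℕ, u (k, c, d')) * (∑' c' : ℕ, u (k, c', d))

end ValueDistance

namespace ValueDistance

section helpers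

/-- Expectation. -/
noncomputable def Ex {α : Type} (P : PMF α) (f : α → ℝ) : ℝ := ∑' x, (P x).toReal * f x

lemma hs1 {α : Type} (P : PMF α) : HasSum (fun x => (P x).toReal) 1 := by
  have h := P.tsum_coe
  have h2 : Summable (fun x => (P x).toReal) := ENNReal.summable_toReal (by rw [h]; simp)
  have h3 := ENNReal.tsum_toReal_eq (f := fun x => P x) (fun x => P.apply_ne_top x)
  rw [h] at h3
  simp only [ENNReal.toReal_one] at h3
  rw [h3]; exact h2.hasSum

lemma sumEx {α : Type} (P : PMF α) (f : α → ℝ) (C : ℝ) (hf : ∀ x, |f x| ≤ C) :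
    Summable (fun x => (P x).toReal * f x) := by
  refine Summable.of_norm_bounded (g := fun x => (P x).toReal * C)
    ((hs1 P).summable.mul_right C) (fun x => ?_)
  rw [Real.norm_eq_abs, abs_mul, abs_of_nonneg ENNReal.toReal_nonneg]
  exact mul_le_mul_of_nonneg_left (hf x) ENNReal.toReal_nonneg

lemma Ex_const {α : Type} (P : PMF α) (c : ℝ) : Ex P (fun _ => c) = c := by
  unfold Ex; rw [tsum_mul_right, (hs1 P).tsum_eq, one_mul]

lemma Ex_mono {α : Type} (P : PMF α) (f g : α → ℝ) (C D : ℝ) (hf : ∀ x, |f x| ≤ C)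
    (hg : ∀ x, |g x| ≤ D) (h : ∀ x, f x ≤ g x) : Ex P f ≤ Ex P g :=
  Summable.tsum_le_tsum (fun x => mul_le_mul_of_nonneg_left (h x) ENNReal.toReal_nonneg)
    (sumEx P f C hf) (sumEx P g D hg)

lemma Ex_abs {α : Type} (P : PMF α) (f : α → ℝ) (C : ℝ) (hf : ∀ x, |f x| ≤ C) :
    |Ex P f| ≤ C := by
  rw [abs_le]
  constructor
  · rw [← Ex_const P (-C)]
    exact Ex_mono P _ _ |C| C (fun x => by simp) hf (fun x => (abs_le.1 (hf x)).1)
  · conv_rhs => rw [← Ex_const P (C)]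
    exact Ex_mono P _ _ C |C| hf (fun x => by simp) (fun x => (abs_le.1 (hf x)).2)

lemma Ex_pure {α : Type} (a : α) (f : α → ℝ) : Ex (PMF.pure a) f = f a := by
  unfold Ex
  rw [tsum_eq_single a]
  · simp
  · intro b hb; simp [PMF.pure_apply, hb]

lemma sum_aux {α β : Type} (a : α → ℝ) (b : α → β → ℝ) (ha : ∀ x, 0 ≤ a x)
    (hb : ∀ x y, 0 ≤ b x y) (hsa : HasSum a 1) (hsb : ∀ x, HasSum (b x) 1) :
    Summable (fun p : α × β => a p.1 * b p.1 p.2) := by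
  have h0 : (0 : α × β → ℝ) ≤ fun p : α × β => a p.1 * b p.1 p.2 :=
      fun p => mul_nonneg (ha _) (hb _ _)
  refine (summable_prod_of_nonneg h0).2 ⟨fun x => ?_, ?_⟩
  · exact (hsb x).summable.mul_left (a x)
  · have h2 : ∀ x, ∑' y, a x * b x y = a x := by
      intro x
      rw [tsum_mul_left, (hsb x).tsum_eq, mul_one]
    simp only [h2]
    exact hsa.summable

lemma Ex_bind {α β : Type} (P : PMF α) (Q : α → PMF β) (f : β → ℝ) (C : ℝ)
    (hf : ∀ x, |f x| ≤ C) : Ex (P.bind Q) f = Ex P (fun x => Ex (Q x) f) := by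
  unfold Ex
  have h1 : ∀ y, ((P.bind Q) y).toReal * f y
      = ∑' x, (P x).toReal * (Q x y).toReal * f y := by
    intro y
    rw [PMF.bind_apply, ENNReal.tsum_toReal_eq, tsum_mul_right]
    · simp only [ENNReal.toReal_mul]
    · intro a; exact ENNReal.mul_ne_top (P.apply_ne_top _) ((Q a).apply_ne_top _)
  simp only [h1]
  have hS : Summable (fun p : α × β => (P p.1).toReal * (Q p.1 p.2).toReal) := by
    exact sum_aux (fun x => (P x).toReal) (fun x y => (Q x y).toReal)
      (fun _ => ENNReal.toReal_nonneg) (fun _ _ => ENNReal.toReal_nonneg) (hs1 P)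
      (fun x => hs1 (Q x))
  have hS2 : Summable (fun p : α × β => (P p.1).toReal * (Q p.1 p.2).toReal * f p.2) := by
    refine Summable.of_norm_bounded (hS.mul_right C) (fun p => ?_)
    rw [Real.norm_eq_abs, abs_mul, abs_of_nonneg
      (mul_nonneg ENNReal.toReal_nonneg ENNReal.toReal_nonneg)]
    exact mul_le_mul_of_nonneg_left (hf _)
      (mul_nonneg ENNReal.toReal_nonneg ENNReal.toReal_nonneg)
  rw [Summable.tsum_comm (f := fun x y => (P x).toReal * (Q x y).toReal * f y) hS2]
  simp only [mul_assoc, tsum_mul_left]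

lemma Ex_map {α β : Type} (P : PMF α) (φ : α → β) (f : β → ℝ) (C : ℝ)
    (hf : ∀ x, |f x| ≤ C) : Ex (P.map φ) f = Ex P (fun x => f (φ x)) := by
  rw [PMF.map, Ex_bind P _ f C hf]
  simp [Ex_pure]

lemma Ex_ind {α : Type} [DecidableEq α] (P : PMF α) (y : α) :
    Ex P (fun x => if x = y then 1 else 0) = (P y).toReal := by
  unfold Ex
  rw [tsum_eq_single y]
  · simp
  · intro b hb; simp [hb]

lemma Ex_finsum {α ι : Type} (P : PMF α) (s : Finset ι) (f : ι → α → ℝ) (C : ι → ℝ)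
    (hf : ∀ i x, |f i x| ≤ C i) : Ex P (fun x => ∑ i ∈ s, f i x) = ∑ i ∈ s, Ex P (f i) := by
  unfold Ex
  simp only [Finset.mul_sum]
  exact Summable.tsum_finsetSum (fun i _ => sumEx P _ (C i) (hf i))

lemma Ex_smul {α : Type} (P : PMF α) (c : ℝ) (f : α → ℝ) :
    Ex P (fun x => c * f x) = c * Ex P f := by
  unfold Ex; rw [← tsum_mul_left]; congr 1; ext x; ring

lemma Ex_add {α : Type} (P : PMF α) (f g : α → ℝ) (C D : ℝ) (hf : ∀ x, |f x| ≤ C)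
    (hg : ∀ x, |g x| ≤ D) : Ex P (fun x => f x + g x) = Ex P f + Ex P g := by
  unfold Ex
  rw [← Summable.tsum_add (sumEx P f C hf) (sumEx P g D hg)]
  simp only [mul_add]

variable {K : Type}

lemma payoff_eq (u : InfoStruct K) (g : K → ℕ → ℕ → ℝ) (σ τ : Garbling) :
    payoff u g σ τ = Ex u (fun x => Ex (σ x.2.1) (fun i => Ex (τ x.2.2) (fun j => g x.1 i j))) := by
  unfold payoff Ex
  simp only [mul_assoc, tsum_mul_left]

lemma IsPayoff.abs_le {g : K → ℕ → ℕ → ℝ} (h : IsPayoff g) (k i j) : |g k i j| ≤ 1 := by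
  obtain ⟨L, h, -⟩ := h
  exact _root_.abs_le.2 (h k i j)

lemma payoff_abs (u : InfoStruct K) {g : K → ℕ → ℕ → ℝ} (hg : IsPayoff g) (σ τ : Garbling) :
    |payoff u g σ τ| ≤ 1 := by
  rw [payoff_eq]
  exact Ex_abs _ _ _ fun x => Ex_abs _ _ _ fun i => Ex_abs _ _ _ fun j => hg.abs_le _ _ _

lemma payoff_left (u : InfoStruct K) {g : K → ℕ → ℕ → ℝ} (hg : IsPayoff g) (σ τ q : Garbling) :
    payoff (garbleLeft q u) g σ τ = payoff u g (compGarble σ q) τ := by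
  have h : ∀ (τ : Garbling) k i d, |Ex (τ d) (fun j => g k i j)| ≤ 1 :=
    fun τ k i d => Ex_abs _ _ _ fun j => hg.abs_le _ _ _
  rw [payoff_eq, payoff_eq, garbleLeft, Ex_bind (C := 1)]
  · congr 1; ext x
    rw [Ex_map (C := 1), compGarble, Ex_bind (C := 1)]
    · intro i; exact h _ _ _ _
    · intro x; exact Ex_abs _ _ _ fun i => h _ _ _ _
  · intro x; exact Ex_abs _ _ _ fun i => h _ _ _ _

lemma payoff_right (u : InfoStruct K) {g : K → ℕ → ℕ → ℝ} (hg : IsPayoff g) (σ τ q : Garbling) :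
    payoff (garbleRight u q) g σ τ = payoff u g σ (compGarble τ q) := by
  have h : ∀ (τ : Garbling) k i d, |Ex (τ d) (fun j => g k i j)| ≤ 1 :=
    fun τ k i d => Ex_abs _ _ _ fun j => hg.abs_le _ _ _
  have hsw : ∀ (P Q : PMF ℕ) k, Ex P (fun i => Ex Q (fun j => g k i j))
      = Ex Q (fun j => Ex P (fun i => g k i j)) := by
    intro P Q k
    have e1 : Ex (P.bind fun i => Q.map fun j => (i, j)) (fun p => g k p.1 p.2)
       = Ex P (fun i => Ex Q (fun j => g k i j)) := by
      rw [Ex_bind _ _ (fun p : ℕ × ℕ => g k p.1 p.2) 1 (fun _ => hg.abs_le _ _ _)]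
      congr 1; ext i
      rw [Ex_map _ _ (fun p : ℕ × ℕ => g k p.1 p.2) 1 (fun _ => hg.abs_le _ _ _)]
    have e2 : Ex (Q.bind fun j => P.map fun i => (i, j)) (fun p => g k p.1 p.2)
       = Ex Q (fun j => Ex P (fun i => g k i j)) := by
      rw [Ex_bind _ _ (fun p : ℕ × ℕ => g k p.1 p.2) 1 (fun _ => hg.abs_le _ _ _)]
      congr 1; ext i
      rw [Ex_map _ _ (fun p : ℕ × ℕ => g k p.1 p.2) 1 (fun _ => hg.abs_le _ _ _)]
    rw [← e1, ← e2]
    congr 1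
    simp only [PMF.map]
    rw [PMF.bind_comm]
    rfl
  rw [payoff_eq, payoff_eq, garbleRight, Ex_bind (C := 1)]
  · congr 1; ext x
    rw [Ex_map (C := 1)]
    · simp only [hsw, compGarble]
      rw [Ex_bind (C := 1)]
      intro i; exact Ex_abs _ _ _ fun j => hg.abs_le _ _ _
    · intro x; exact Ex_abs _ _ _ fun i => h _ _ _ _
  · intro x; exact Ex_abs _ _ _ fun i => h _ _ _ _

lemma bddB (u : InfoStruct K) {g : K → ℕ → ℕ → ℝ} (hg : IsPayoff g) (σ : Garbling) :
    BddBelow (Set.range fun τ => payoff u g σ τ) :=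
  ⟨-1, by rintro _ ⟨τ, rfl⟩; exact (_root_.abs_le.1 (payoff_abs u hg σ τ)).1⟩

instance : Nonempty Garbling := ⟨fun _ => PMF.pure 0⟩

lemma bddA (u : InfoStruct K) {g : K → ℕ → ℕ → ℝ} (hg : IsPayoff g) :
    BddAbove (Set.range fun σ => ⨅ τ, payoff u g σ τ) :=
  ⟨1, by
    rintro _ ⟨σ, rfl⟩
    exact (ciInf_le (bddB u hg σ) (fun _ => PMF.pure 0)).trans
      (_root_.abs_le.1 (payoff_abs u hg σ _)).2⟩

lemma easy (u v : InfoStruct K) (q₁ q₂ : Garbling) (h : garbleLeft q₁ u = garbleRight v q₂)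
    (g : K → ℕ → ℕ → ℝ) (hg : IsPayoff g) : val v g ≤ val u g := by
  unfold val
  refine ciSup_le fun σ => le_ciSup_of_le (bddA u hg) (compGarble σ q₁) (le_ciInf fun τ => ?_)
  rw [← payoff_left u hg, h, payoff_right v hg]
  exact ciInf_le (bddB v hg σ) _

/-- truncation -/
def tr (L n : ℕ) : Fin (L + 1) := ⟨min n L, by omega⟩

/-- finite-action strategies -/
def St (M : ℕ) : Set (ℕ → Fin M → ℝ) := Set.univ.pi (fun _ : ℕ => stdSimplex ℝ (Fin M))

lemma St_mem {M : ℕ} {σ : ℕ → Fin M → ℝ} (h : σ ∈ St M) (n : ℕ) :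
    (∀ i, 0 ≤ σ n i) ∧ (∀ i, σ n i ≤ 1) ∧ ∑ i, σ n i = 1 := by
  have h1 := h n (Set.mem_univ n)
  refine ⟨h1.1, fun i => ?_, h1.2⟩
  rw [← h1.2]
  exact Finset.single_le_sum (fun j _ => h1.1 j) (Finset.mem_univ i)

lemma St_abs {M : ℕ} {σ : ℕ → Fin M → ℝ} (h : σ ∈ St M) (n : ℕ) (i : Fin M) : |σ n i| ≤ 1 := by
  rw [abs_of_nonneg ((St_mem h n).1 i)]; exact (St_mem h n).2.1 i

open Classical in
/-- The linear map -/
noncomputable def TT {X Y : Type} {M : ℕ} (P : PMF X) (s : X → Y → Prop) (a : X → ℕ) (b : Y → Fin M)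
    (σ : ℕ → Fin M → ℝ) (y : Y) : ℝ := Ex P (fun x => if s x y then σ (a x) (b y) else 0)

lemma TT_abs {X Y : Type} {M : ℕ} (s : X → Y → Prop) (a : X → ℕ) (b : Y → Fin M)
    {σ : ℕ → Fin M → ℝ} (h : σ ∈ St M) (x : X) (y : Y) [Decidable (s x y)] :
    |if s x y then σ (a x) (b y) else 0| ≤ 1 := by
  split_ifs
  · exact St_abs h _ _
  · simp

lemma TT_compact {X Y : Type} {M : ℕ} (P : PMF X) (s : X → Y → Prop) (a : X → ℕ) (b : Y → Fin M) :
    IsCompact (TT P s a b '' St M) := by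
  classical
  apply IsCompact.image_of_continuousOn
  · exact isCompact_univ_pi fun _ => isCompact_stdSimplex ℝ (Fin M)
  · refine continuousOn_pi.2 fun y => ?_
    unfold TT Ex
    refine continuousOn_tsum (u := fun x => (P x).toReal) (fun x => ?_) (hs1 P).summable ?_
    · refine Continuous.continuousOn ?_
      beta_reduce
      split_ifs <;> fun_prop
    · intro x σ hσ
      rw [Real.norm_eq_abs, abs_mul, abs_of_nonneg ENNReal.toReal_nonneg]
      refine mul_le_of_le_one_right ENNReal.toReal_nonneg ?_
      exact TT_abs s a b hσ x y

lemma TT_convex {X Y : Type} {M : ℕ} (P : PMF X) (s : X → Y → Prop) (a : X → ℕ) (b : Y → Fin M) :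
    Convex ℝ (TT P s a b '' St M) := by
  classical
  rintro _ ⟨σ, hσ, rfl⟩ _ ⟨σ', hσ', rfl⟩ α β hα hβ hab
  have hc : Convex ℝ (St M) := convex_pi fun _ _ => convex_stdSimplex ℝ (Fin M)
  refine ⟨α • σ + β • σ', hc hσ hσ' hα hβ hab, ?_⟩
  ext y
  simp only [TT, Pi.add_apply, Pi.smul_apply, smul_eq_mul]
  rw [← Ex_smul, ← Ex_smul, ← Ex_add (C := |α| * 1) (D := |β| * 1)]
  · congr 1; ext x; split_ifs <;> simp
  · intro x; rw [abs_mul]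
    exact mul_le_mul_of_nonneg_left (TT_abs s a b hσ x y) (abs_nonneg _)
  · intro x; rw [abs_mul]
    exact mul_le_mul_of_nonneg_left (TT_abs s a b hσ' x y) (abs_nonneg _)

lemma TT_dot {X Y : Type} [Fintype Y] {M : ℕ} (P : PMF X) (s : X → Y → Prop) (a : X → ℕ)
    (b : Y → Fin M) {σ : ℕ → Fin M → ℝ} (h : σ ∈ St M) (G : Y → ℝ)
    [∀ x y, Decidable (s x y)] :
    ∑ y, TT P s a b σ y * G y = Ex P (fun x => ∑ y, G y * if s x y then σ (a x) (b y) else 0) := by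
  rw [Ex_finsum (C := fun y => |G y| * 1)]
  · refine Finset.sum_congr rfl fun y _ => ?_
    rw [Ex_smul, mul_comm, TT]
    congr 2
    ext x
    split_ifs <;> rfl
  · intro y x
    rw [abs_mul]
    exact mul_le_mul_of_nonneg_left (TT_abs s a b h x y) (abs_nonneg _)

lemma trunc_mem (L : ℕ) (σ : Garbling) :
    (fun n i => ((σ n).map (tr L) i).toReal) ∈ St (L + 1) := by
  intro n _
  refine ⟨fun i => ENNReal.toReal_nonneg, ?_⟩
  have := (hs1 ((σ n).map (tr L))).tsum_eq
  rwa [tsum_fintype] at this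

lemma Ex_trunc (L : ℕ) (P : PMF ℕ) (G : Fin (L + 1) → ℝ) :
    Ex P (fun i => G (tr L i)) = ∑ m, G m * (P.map (tr L) m).toReal := by
  rw [← Ex_map P (tr L) G (∑ m, |G m|)
    (fun x => Finset.single_le_sum (f := fun m => |G m|) (fun j _ => abs_nonneg _)
      (Finset.mem_univ x)), Ex, tsum_fintype]
  simp only [mul_comm]

/-- The two selection relations. -/
def sL (K : Type) (L : ℕ) (x : K × ℕ × ℕ) (y : K × Fin (L + 1) × Fin (L + 1)) : Prop :=
  x.1 = y.1 ∧ tr L x.2.2 = y.2.2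

/-- The two selection relations. -/
def sR (K : Type) (L : ℕ) (x : K × ℕ × ℕ) (y : K × Fin (L + 1) × Fin (L + 1)) : Prop :=
  x.1 = y.1 ∧ tr L x.2.1 = y.2.1

lemma dotL [Fintype K] (u : InfoStruct K) (L : ℕ) {σ : ℕ → Fin (L + 1) → ℝ} (h : σ ∈ St (L + 1))
    (G : K × Fin (L + 1) × Fin (L + 1) → ℝ) :
    ∑ y, TT u (sL K L) (fun x => x.2.1) (fun y => y.2.1) σ y * G y
      = Ex u (fun x => ∑ i, G (x.1, i, tr L x.2.2) * σ x.2.1 i) := by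
  classical
  have : ∀ x y, Decidable (sL K L x y) := fun _ _ => Classical.dec _
  rw [TT_dot _ _ _ _ h]
  congr 1; ext x
  simp only [sL, Fintype.sum_prod_type]
  rw [Finset.sum_eq_single x.1 (fun k _ hk => by simp [hk.symm]) (by simp)]
  simp

lemma dotR [Fintype K] (u : InfoStruct K) (L : ℕ) {σ : ℕ → Fin (L + 1) → ℝ} (h : σ ∈ St (L + 1))
    (G : K × Fin (L + 1) × Fin (L + 1) → ℝ) :
    ∑ y, TT u (sR K L) (fun x => x.2.2) (fun y => y.2.2) σ y * G y
      = Ex u (fun x => ∑ i, G (x.1, tr L x.2.1, i) * σ x.2.2 i) := by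
  classical
  have : ∀ x y, Decidable (sR K L x y) := fun _ _ => Classical.dec _
  rw [TT_dot _ _ _ _ h]
  congr 1; ext x
  simp only [sR, Fintype.sum_prod_type]
  rw [Finset.sum_eq_single x.1 (fun k _ hk => by simp [hk.symm]) (by simp),
    Finset.sum_eq_single (tr L x.2.1) (fun k _ hk => by simp [hk.symm]) (by simp)]
  simp

lemma level [Fintype K] (u v : InfoStruct K)
    (h : ∀ g : K → ℕ → ℕ → ℝ, IsPayoff g → val v g ≤ val u g) (L : ℕ) :
    ∃ σ ∈ St (L + 1), ∃ τ ∈ St (L + 1),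
      TT u (sL K L) (fun x => x.2.1) (fun y => y.2.1) σ
        = TT v (sR K L) (fun x => x.2.2) (fun y => y.2.2) τ := by
  classical
  by_contra hcon
  have hdis : Disjoint (TT u (sL K L) (fun x => x.2.1) (fun y => y.2.1) '' St (L + 1))
      (TT v (sR K L) (fun x => x.2.2) (fun y => y.2.2) '' St (L + 1)) := by
    rw [Set.disjoint_left]
    rintro _ ⟨σ, hσ, rfl⟩ ⟨τ, hτ, he⟩
    exact hcon ⟨σ, hσ, τ, hτ, he.symm⟩
  obtain ⟨f, s, t, hs, hst, ht⟩ := geometric_hahn_banach_compact_closed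
    (TT_convex u (sL K L) (fun x => x.2.1) (fun y => y.2.1))
    (TT_compact _ _ _ _) (TT_convex v (sR K L) (fun x => x.2.2) (fun y => y.2.2))
    (TT_compact _ _ _ _).isClosed hdis
  obtain ⟨G, hG⟩ : ∃ G : K × Fin (L + 1) × Fin (L + 1) → ℝ, ∀ a, f a = ∑ y, a y * G y :=
    ⟨_, fun a => LinearMap.pi_apply_eq_sum_univ f.toLinearMap a⟩
  set C : ℝ := 1 + ∑ y, |G y| with hC
  have hC0 : 0 < C := by positivity
  have hGC : ∀ y, |G y / C| ≤ 1 := by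
    intro y
    rw [abs_div, abs_of_pos hC0, div_le_one hC0]
    have := Finset.single_le_sum (f := fun m => |G m|) (fun j _ => abs_nonneg _)
      (Finset.mem_univ y)
    linarith
  let g : K → ℕ → ℕ → ℝ := fun k i j =>
    if i ≤ L then if j ≤ L then G (k, tr L i, tr L j) / C else 1 else -1
  have hg : IsPayoff g := by
    refine ⟨L + 1, fun k i j => ?_, fun k i j hi => ?_, fun k i j hi hj => ?_⟩
    · simp only [g]
      split_ifs
      · exact abs_le.1 (hGC _)
      · norm_num
      · norm_num
    · simp only [g]; rw [if_neg (by omega)]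
    · simp only [g]; rw [if_pos (by omega), if_neg (by omega)]
  have trmin : ∀ n, tr L (min n L) = tr L n := by
    intro n; simp [tr]
  have hGC' : ∀ y, |G y| ≤ C := by
    intro y
    have := hGC y
    rwa [abs_div, abs_of_pos hC0, div_le_one hC0] at this
  have hu : ∀ σ : Garbling, payoff u g σ (fun d => PMF.pure (min d L)) ≤ s / C := by
    intro σ
    have hm := trunc_mem L σ
    have h1 := hs _ ⟨_, hm, rfl⟩
    rw [hG, dotL _ _ hm] at h1
    have e : ∀ x : K × ℕ × ℕ, ∑ i, G (x.1, i, tr L x.2.2) * ((σ x.2.1).map (tr L) i).toReal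
        = Ex (σ x.2.1) (fun i => G (x.1, tr L i, tr L x.2.2)) :=
      fun x => (Ex_trunc L _ (fun i => G (x.1, i, tr L x.2.2))).symm
    simp only [e] at h1
    rw [payoff_eq, le_div_iff₀ hC0, mul_comm, ← Ex_smul]
    refine le_trans ?_ h1.le
    refine Ex_mono _ _ _ (C * 1) (C) ?_ ?_ ?_
    · intro x
      rw [abs_mul, abs_of_pos hC0]
      exact mul_le_mul_of_nonneg_left
        (Ex_abs _ _ _ fun i => Ex_abs _ _ _ fun j => hg.abs_le _ _ _) hC0.le
    · intro x
      exact Ex_abs _ _ _ fun i => hGC' _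
    · intro x
      rw [← Ex_smul]
      refine Ex_mono _ _ _ (C * 1) C ?_ (fun i => hGC' _) ?_
      · intro i
        rw [abs_mul, abs_of_pos hC0]
        exact mul_le_mul_of_nonneg_left (Ex_abs _ _ _ fun j => hg.abs_le _ _ _) hC0.le
      · intro i
        rw [Ex_pure, mul_comm, ← le_div_iff₀ hC0]
        simp only [g, trmin]
        split_ifs with h1 h2
        · exact le_rfl
        · exact absurd (min_le_right _ _) h2
        · exact (abs_le.1 (hGC _)).1
  have hv : ∀ τ : Garbling, t / C ≤ payoff v g (fun d => PMF.pure (min d L)) τ := by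
    intro τ
    have hm := trunc_mem L τ
    have h1 := ht _ ⟨_, hm, rfl⟩
    rw [hG, dotR _ _ hm] at h1
    have e : ∀ x : K × ℕ × ℕ, ∑ i, G (x.1, tr L x.2.1, i) * ((τ x.2.2).map (tr L) i).toReal
        = Ex (τ x.2.2) (fun i => G (x.1, tr L x.2.1, tr L i)) :=
      fun x => (Ex_trunc L _ (fun i => G (x.1, tr L x.2.1, i))).symm
    simp only [e] at h1
    rw [payoff_eq, div_le_iff₀ hC0, mul_comm, ← Ex_smul]
    refine le_trans h1.le ?_
    refine Ex_mono _ _ _ C (C * 1) ?_ ?_ ?_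
    · intro x
      exact Ex_abs _ _ _ fun i => hGC' _
    · intro x
      rw [abs_mul, abs_of_pos hC0]
      exact mul_le_mul_of_nonneg_left
        (Ex_abs _ _ _ fun i => Ex_abs _ _ _ fun j => hg.abs_le _ _ _) hC0.le
    · intro x
      rw [Ex_pure, ← Ex_smul]
      refine Ex_mono _ _ _ C (C * 1) (fun i => hGC' _) ?_ ?_
      · intro i
        rw [abs_mul, abs_of_pos hC0]
        exact mul_le_mul_of_nonneg_left (hg.abs_le _ _ _) hC0.le
      · intro j
        rw [mul_comm, ← div_le_iff₀ hC0]
        simp only [g, trmin]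
        split_ifs with h1 h2
        · exact le_rfl
        · exact (abs_le.1 (hGC _)).2
        · exact absurd (min_le_right _ _) h1
  have h1 : val u g ≤ s / C :=
    ciSup_le fun σ => (ciInf_le (bddB u hg σ) _).trans (hu σ)
  have h2 : t / C ≤ val v g :=
    le_ciSup_of_le (bddA v hg) (fun d => PMF.pure (min d L)) (le_ciInf hv)
  have h3 : s / C < t / C := div_lt_div_of_pos_right hst hC0
  linarith [h g hg]

open Classical in
/-- Properties at level `L`. -/
def Good (u v : InfoStruct K) (s t : ℕ → ℕ → ℝ) (c d : ℕ) : Prop :=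
  (∀ k, Ex u (fun x => if x.1 = k ∧ x.2.2 = d then s x.2.1 c else 0)
      = Ex v (fun x => if x.1 = k ∧ x.2.1 = c then t x.2.2 d else 0)) ∧
  Ex u (fun x => s x.2.1 c) = Ex v (fun x => if x.2.1 = c then 1 else 0) ∧
  Ex v (fun x => t x.2.2 d) = Ex u (fun x => if x.2.2 = d then 1 else 0)

/-- Subprobability matrices. -/
def Sub (s : ℕ → ℕ → ℝ) : Prop :=
  (∀ n i, 0 ≤ s n i) ∧ ∀ n (F : Finset ℕ), ∑ i ∈ F, s n i ≤ 1

lemma Sub.le_one {s : ℕ → ℕ → ℝ} (h : Sub s) (n i) : s n i ≤ 1 := by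
  simpa using h.2 n {i}

lemma Sub.abs {s : ℕ → ℕ → ℝ} (h : Sub s) (n i) : |s n i| ≤ 1 := by
  rw [abs_of_nonneg (h.1 n i)]; exact h.le_one n i

lemma tr_inj {L a b : ℕ} (hb : b < L) : tr L a = tr L b ↔ a = b := by
  simp only [tr, Fin.mk.injEq]; omega

/-- Extension by zero. -/
noncomputable def ext0 (L : ℕ) (σ : ℕ → Fin (L + 1) → ℝ) (n i : ℕ) : ℝ :=
  if i ≤ L then σ n (tr L i) else 0

lemma ext0_sub {L : ℕ} {σ : ℕ → Fin (L + 1) → ℝ} (h : σ ∈ St (L + 1)) : Sub (ext0 L σ) := by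
  classical
  refine ⟨fun n i => ?_, fun n F => ?_⟩
  · unfold ext0; split_ifs
    · exact (St_mem h n).1 _
    · exact le_rfl
  · unfold ext0
    rw [← Finset.sum_filter, ← (St_mem h n).2.2,
      ← Finset.sum_image (g := tr L) (f := fun m => σ n m)]
    · exact Finset.sum_le_sum_of_subset_of_nonneg (Finset.subset_univ _)
        (fun i _ _ => (St_mem h n).1 i)
    · intro a ha b hb hab
      simp only [Finset.coe_filter, Set.mem_ofPred_eq] at ha hb
      simp only [tr, Fin.mk.injEq] at hab
      omega

lemma level' [Fintype K] (u v : InfoStruct K)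
    (h : ∀ g : K → ℕ → ℕ → ℝ, IsPayoff g → val v g ≤ val u g) (L : ℕ) :
    ∃ p : (ℕ → ℕ → ℝ) × (ℕ → ℕ → ℝ), Sub p.1 ∧ Sub p.2 ∧
      ∀ c d, c < L → d < L → Good u v p.1 p.2 c d := by
  classical
  obtain ⟨σ, hσ, τ, hτ, he⟩ := level u v h L
  refine ⟨(ext0 L σ, ext0 L τ), ext0_sub hσ, ext0_sub hτ, fun c d hc hd => ⟨fun k => ?_, ?_, ?_⟩⟩
  · have := congrFun he (k, tr L c, tr L d)
    simpa only [TT, sL, sR, ext0, tr_inj hc, tr_inj hd, hc.le, hd.le, if_true] using this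
  · have h1 := dotL u L hσ (fun y => if y.2.1 = tr L c then 1 else 0)
    rw [he, dotR v L hτ] at h1
    simp only [ite_mul, one_mul, zero_mul, Finset.sum_ite_eq', Finset.mem_univ, if_true,
      tr_inj hc] at h1
    simp only [ext0, hc.le, if_true]
    rw [← h1]
    congr 1; ext x
    split_ifs
    · exact (St_mem hτ _).2.2
    · simp
  · have h1 := dotL u L hσ (fun y => if y.2.2 = tr L d then 1 else 0)
    rw [he, dotR v L hτ] at h1
    simp only [ite_mul, one_mul, zero_mul, Finset.sum_ite_eq', Finset.mem_univ, if_true,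
      tr_inj hd] at h1
    simp only [ext0, hd.le, if_true]
    rw [h1]
    congr 1; ext x
    split_ifs
    · exact (St_mem hσ _).2.2
    · simp

open Filter Topology

lemma Ex_tendsto {X : Type} (P : PMF X) (f : ℕ → X → ℝ) (g : X → ℝ)
    (h : ∀ x, Tendsto (fun n => f n x) atTop (𝓝 (g x))) (hb : ∀ n x, |f n x| ≤ 1) :
    Tendsto (fun n => Ex P (f n)) atTop (𝓝 (Ex P g)) := by
  unfold Ex
  refine tendsto_tsum_of_dominated_convergence (bound := fun x => (P x).toReal)
    (hs1 P).summable (fun x => (h x).const_mul _) (Eventually.of_forall fun n x => ?_)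
  rw [Real.norm_eq_abs, abs_mul, abs_of_nonneg ENNReal.toReal_nonneg]
  exact mul_le_of_le_one_right ENNReal.toReal_nonneg (hb n x)

lemma limit_exists [Fintype K] (u v : InfoStruct K)
    (h : ∀ g : K → ℕ → ℕ → ℝ, IsPayoff g → val v g ≤ val u g) :
    ∃ s t : ℕ → ℕ → ℝ, Sub s ∧ Sub t ∧ ∀ c d, Good u v s t c d := by
  classical
  choose p hp1 hp2 hp using level' u v h
  have hcpt : IsCompact (Set.univ.pi (fun _ : ℕ => Set.univ.pi (fun _ : ℕ => Set.Icc (0 : ℝ) 1))) :=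
    isCompact_univ_pi fun _ => isCompact_univ_pi fun _ => isCompact_Icc
  obtain ⟨⟨s, t⟩, -, φ, hφ, hlim⟩ := (hcpt.prod hcpt).tendsto_subseq (x := p) (fun L =>
    ⟨fun n _ i _ => ⟨(hp1 L).1 n i, (hp1 L).le_one n i⟩,
      fun n _ i _ => ⟨(hp2 L).1 n i, (hp2 L).le_one n i⟩⟩)
  have hs : ∀ n i, Tendsto (fun L => (p (φ L)).1 n i) atTop (𝓝 (s n i)) := fun n i =>
    ((show Continuous fun r : (ℕ → ℕ → ℝ) × (ℕ → ℕ → ℝ) => r.1 n i by fun_prop).tendsto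
      (s, t)).comp hlim
  have ht : ∀ n i, Tendsto (fun L => (p (φ L)).2 n i) atTop (𝓝 (t n i)) := fun n i =>
    ((show Continuous fun r : (ℕ → ℕ → ℝ) × (ℕ → ℕ → ℝ) => r.2 n i by fun_prop).tendsto
      (s, t)).comp hlim
  refine ⟨s, t, ⟨fun n i => ge_of_tendsto' (hs n i) fun L => (hp1 _).1 n i, fun n F =>
    le_of_tendsto' (tendsto_finsetSum F fun i _ => hs n i) fun L => (hp1 _).2 n F⟩,
    ⟨fun n i => ge_of_tendsto' (ht n i) fun L => (hp2 _).1 n i, fun n F =>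
    le_of_tendsto' (tendsto_finsetSum F fun i _ => ht n i) fun L => (hp2 _).2 n F⟩,
    fun c d => ?_⟩
  have hev : ∀ᶠ L in atTop, Good u v (p (φ L)).1 (p (φ L)).2 c d := by
    filter_upwards [eventually_gt_atTop (max c d)] with L hL
    have := hφ.id_le L
    simp only [id] at this
    exact hp _ c d (by omega) (by omega)
  refine ⟨fun k => ?_, ?_, ?_⟩
  · have h1 := Ex_tendsto u (fun L x => if x.1 = k ∧ x.2.2 = d then (p (φ L)).1 x.2.1 c else 0)
      (fun x => if x.1 = k ∧ x.2.2 = d then s x.2.1 c else 0)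
      (fun x => by
        split_ifs
        · exact hs _ _
        · exact tendsto_const_nhds)
      (fun L x => by
        split_ifs
        · exact (hp1 _).abs _ _
        · simp)
    have h2 := Ex_tendsto v (fun L x => if x.1 = k ∧ x.2.1 = c then (p (φ L)).2 x.2.2 d else 0)
      (fun x => if x.1 = k ∧ x.2.1 = c then t x.2.2 d else 0)
      (fun x => by
        split_ifs
        · exact ht _ _
        · exact tendsto_const_nhds)
      (fun L x => by
        split_ifs
        · exact (hp2 _).abs _ _
        · simp)
    have := tendsto_nhds_unique_of_eventuallyEq h1 h2 (hev.mono fun L hL => by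
      convert hL.1 k)
    convert this
  · have h1 := Ex_tendsto u (fun L x => (p (φ L)).1 x.2.1 c)
      (fun x => s x.2.1 c) (fun x => hs _ _) (fun L x => (hp1 _).abs _ _)
    exact tendsto_nhds_unique_of_eventuallyEq h1 tendsto_const_nhds (hev.mono fun L hL => hL.2.1)
  · have h1 := Ex_tendsto v (fun L x => (p (φ L)).2 x.2.2 d)
      (fun x => t x.2.2 d) (fun x => ht _ _) (fun L x => (hp2 _).abs _ _)
    exact tendsto_nhds_unique_of_eventuallyEq h1 tendsto_const_nhds (hev.mono fun L hL => hL.2.2)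

lemma mass_one {X Y : Type} (P : PMF X) (R : PMF Y) (a : X → ℕ) (b : Y → ℕ) (s : ℕ → ℕ → ℝ)
    (hs : Sub s) (h : ∀ c, Ex P (fun x => s (a x) c) = Ex R (fun y => if b y = c then 1 else 0))
    (x : X) (hx : P x ≠ 0) : HasSum (s (a x)) 1 := by
  have hsum : ∀ n, Summable (s n) := fun n => summable_of_sum_le (hs.1 n) (hs.2 n)
  have hle : ∀ n, ∑' c, s n c ≤ 1 := fun n => (hsum n).tsum_le_of_sum_le (hs.2 n)
  have hnn : ∀ n, 0 ≤ ∑' c, s n c := fun n => tsum_nonneg (hs.1 n)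
  have habs : ∀ n, |∑' c, s n c| ≤ 1 := fun n => by rw [abs_of_nonneg (hnn n)]; exact hle n
  have h1 : HasSum (fun c => Ex P (fun x => s (a x) c)) 1 := by
    have e : (fun c => Ex P (fun x => s (a x) c)) = fun c => ((R.map b) c).toReal := by
      ext c
      rw [h, ← Ex_ind, Ex_map (C := 1)]
      intro y; split_ifs <;> simp
    rw [e]; exact hs1 _
  have h2 : 1 ≤ Ex P (fun x => ∑' c, s (a x) c) := by
    refine le_of_tendsto' h1.tendsto_sum_nat fun N => ?_
    rw [← Ex_finsum P _ (fun c x => s (a x) c) (fun _ => 1) (fun i x => hs.abs _ _)]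
    refine Ex_mono _ _ _ 1 1 (fun x => ?_) (fun x => habs _) fun x => ?_
    · rw [abs_of_nonneg (Finset.sum_nonneg fun i _ => hs.1 _ i)]
      exact hs.2 _ _
    · exact (hsum _).sum_le_tsum _ fun i _ => hs.1 _ i
  have h3 : ∑' c, s (a x) c = 1 := by
    by_contra hne
    have hlt := lt_of_le_of_ne (hle (a x)) hne
    have h4 : Ex P (fun x => ∑' c, s (a x) c) < Ex P (fun _ => 1) := by
      refine Summable.tsum_lt_tsum (i := x) (fun y => ?_) ?_ (sumEx P _ 1 fun x => habs _)
        (sumEx P _ 1 fun x => by simp)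
      · exact mul_le_mul_of_nonneg_left (hle _) ENNReal.toReal_nonneg
      · exact mul_lt_mul_of_pos_left hlt (ENNReal.toReal_pos hx (P.apply_ne_top x))
    rw [Ex_const] at h4
    linarith
  rw [← h3]; exact (hsum _).hasSum

lemma mkq (s : ℕ → ℕ → ℝ) (hs : ∀ n i, 0 ≤ s n i) :
    ∃ q : Garbling, ∀ n, HasSum (s n) 1 → ∀ i, (q n i).toReal = s n i := by
  classical
  have : ∀ n, ∃ P : PMF ℕ, HasSum (s n) 1 → ∀ i, (P i).toReal = s n i := by
    intro n
    by_cases h : HasSum (s n) 1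
    · refine ⟨⟨fun i => ENNReal.ofReal (s n i), ?_⟩, fun _ i => ?_⟩
      · rw [ENNReal.summable.hasSum_iff, ← ENNReal.ofReal_tsum_of_nonneg (hs n) h.summable,
          h.tsum_eq, ENNReal.ofReal_one]
      · exact ENNReal.toReal_ofReal (hs n i)
    · exact ⟨PMF.pure 0, fun h' => absurd h' h⟩
  choose q hq using this
  exact ⟨q, hq⟩

open Classical in
lemma gl_apply (q : Garbling) (u : InfoStruct K) (k c d) :
    (garbleLeft q u (k, c, d)).toReal
      = Ex u (fun x => if x.1 = k ∧ x.2.2 = d then (q x.2.1 c).toReal else 0) := by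
  have hb : ∀ x y : K × ℕ × ℕ, |if x = y then (1 : ℝ) else 0| ≤ 1 := by
    intro x y; split_ifs <;> simp
  rw [← Ex_ind, garbleLeft, Ex_bind (C := 1) (hf := fun x => hb x _)]
  congr 1; ext x
  rw [Ex_map (C := 1) (hf := fun x => hb x _)]
  split_ifs with h
  · rw [← Ex_ind]
    congr 1; ext i; simp [h]
  · refine Eq.trans ?_ (Ex_const (q x.2.1) 0)
    congr 1; ext i
    simp only [Prod.mk.injEq, ite_eq_right_iff]
    intro h'; exact absurd ⟨h'.1, h'.2.2⟩ h

open Classical in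
lemma gr_apply (q : Garbling) (u : InfoStruct K) (k c d) :
    (garbleRight u q (k, c, d)).toReal
      = Ex u (fun x => if x.1 = k ∧ x.2.1 = c then (q x.2.2 d).toReal else 0) := by
  have hb : ∀ x y : K × ℕ × ℕ, |if x = y then (1 : ℝ) else 0| ≤ 1 := by
    intro x y; split_ifs <;> simp
  rw [← Ex_ind, garbleRight, Ex_bind (C := 1) (hf := fun x => hb x _)]
  congr 1; ext x
  rw [Ex_map (C := 1) (hf := fun x => hb x _)]
  split_ifs with h
  · rw [← Ex_ind]
    congr 1; ext i; simp [h]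
  · refine Eq.trans ?_ (Ex_const (q x.2.2) 0)
    congr 1; ext i
    simp only [Prod.mk.injEq, ite_eq_right_iff]
    intro h'; exact absurd ⟨h'.1, h'.2.1⟩ h

lemma Ex_congr {X : Type} (P : PMF X) (f g : X → ℝ) (h : ∀ x, P x ≠ 0 → f x = g x) :
    Ex P f = Ex P g := by
  unfold Ex
  congr 1; ext x
  by_cases hx : P x = 0
  · simp [hx]
  · rw [h x hx]

lemma hard [Fintype K] (u v : InfoStruct K)
    (h : ∀ g : K → ℕ → ℕ → ℝ, IsPayoff g → val v g ≤ val u g) :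
    ∃ q₁ q₂ : Garbling, garbleLeft q₁ u = garbleRight v q₂ := by
  classical
  obtain ⟨s, t, hs, ht, hG⟩ := limit_exists u v h
  obtain ⟨q₁, h₁⟩ := mkq s hs.1
  obtain ⟨q₂, h₂⟩ := mkq t ht.1
  have m₁ := mass_one u v (fun x => x.2.1) (fun x => x.2.1) s hs (fun c => (hG c 0).2.1)
  have m₂ := mass_one v u (fun x => x.2.2) (fun x => x.2.2) t ht (fun d => (hG 0 d).2.2)
  refine ⟨q₁, q₂, ?_⟩
  ext ⟨k, c, d⟩
  rw [← ENNReal.toReal_eq_toReal_iff' (PMF.apply_ne_top _ _) (PMF.apply_ne_top _ _),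
    gl_apply, gr_apply]
  refine Eq.trans ?_ (((hG c d).1 k).trans ?_)
  · refine Ex_congr _ _ _ fun x hx => ?_
    simp only [h₁ _ (m₁ x hx)]
  · refine Ex_congr _ _ _ fun x hx => ?_
    simp only [h₂ _ (m₂ x hx)]

end helpers

theorem comparison_iff_garblings (K : Type) [Fintype K]
    (hK : 2 ≤ Fintype.card K) (u v : InfoStruct K) :
    (∀ g : K → ℕ → ℕ → ℝ, IsPayoff g → val v g ≤ val u g) ↔
      ∃ q₁ q₂ : Garbling, garbleLeft q₁ u = garbleRight v q₂ :=
  ⟨fun h => hard u v h, fun ⟨q₁, q₂, h⟩ g hg => easy u v q₁ q₂ h g hg⟩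

end ValueDistance
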